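/- arXiv:1603.02235 — 2 statements merged into one kernel-verified Lean document; each statement's English description precedes it below -/
import Mathlib

section
/- Let μ_n ∈ (0,1) with μ_n → μ ∈ (0,1), let X^{(n)} have the Borel distribution with parameter μ_n, and let (l_n) be positive integers with l_n → ∞. Then log P(X^{(n)} = l_n) = −κ·l_n·(1 + o(1)) and log P(X^{(n)} ≥ l_n) = −κ·l_n·(1 + o(1)) as n → ∞, where κ = μ − log μ − 1 ∈ (0,∞). -/
open Filter Asymptotics

/-- The Borel distribution with parameter `μ`: `P(X = l) = e^{-μl} (μl)^{l-1} / l!` for `l ≥ 1`. -/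
noncomputable def borelPMF (μ : ℝ) (l : ℕ) : ℝ :=
  Real.exp (-(μ * l)) * (μ * l) ^ (l - 1) / (Nat.factorial l)

/-- `P(X ≥ L)` for `X` having the Borel distribution with parameter `μ`. -/
noncomputable def borelTail (μ : ℝ) (L : ℕ) : ℝ :=
  ∑' k : ℕ, borelPMF μ (L + k)

/-!
Stirling's formula turns `log P(X = l)` into `-κ(m) l - log m - (3/2) log l + O(1)`, where
`κ(m) = m - log m - 1`. As `κ` and `log` are continuous on `(0, ∞)`, letting `m` converge in
`(0, ∞)` instead of fixing it only costs `o(l)`. The lower half of Stirling's formula also gives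
`P(X = l) ≤ e^{-κ(m) l} l^{-3/2} / m`. Since `κ ≥ 0` and `∑ l^{-3/2}` converges, `P(X ≥ l)` is at
most a constant times `e^{-κ(m) l} / m`, and it is at least its first term. This bound does not
degenerate as `m → 1`, unlike the one obtained from the geometric series `∑ e^{-κ(m) l}`.
-/

section Asymptotics

variable {ι : Type*} {F : Filter ι}

lemma isLittleO_of_le_of_le {E : Type*} [Norm E] {f g h : ι → ℝ} {k : ι → E}
    (hf : f =o[F] k) (hh : h =o[F] k) (hfg : f ≤ᶠ[F] g) (hgh : g ≤ᶠ[F] h) : g =o[F] k := by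
  refine IsBigO.trans_isLittleO (.of_bound' ?_) (hf.norm_left.add hh.norm_left)
  filter_upwards [hfg, hgh] with i hfg hgh
  calc ‖g i‖ ≤ max ‖f i‖ ‖h i‖ := abs_le_max_abs_abs hfg hgh
    _ ≤ ‖f i‖ + ‖h i‖ := max_le_add_of_nonneg (norm_nonneg _) (norm_nonneg _)
    _ ≤ ‖‖f i‖ + ‖h i‖‖ := Real.le_norm_self _

lemma isLittleO_of_tendsto_nhds_of_tendsto_norm {E E' : Type*} [SeminormedAddCommGroup E]
    [NormedAddCommGroup E'] {u : ι → E} {k : ι → E'} {a : E} (hu : Tendsto u F (nhds a))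
    (hk : Tendsto (fun i => ‖k i‖) F atTop) : u =o[F] k :=
  (hu.isBigO_one ℝ).trans_isLittleO (isLittleO_const_left.2 (.inr hk))

lemma sub_mul_isLittleO {R : Type*} [SeminormedRing R] {a k : ι → R} {b : R}
    (ha : Tendsto a F (nhds b)) : (fun i => (b - a i) * k i) =o[F] k := by
  have hsub : (fun i => b - a i) =o[F] (fun _ => (1 : ℝ)) :=
    (isLittleO_one_iff ℝ).2 (by simpa using ha.const_sub b)
  simpa using hsub.mul_isBigO (isBigO_refl k F).norm_right

end Asymptotics

/-- The exponential decay rate `κ(m) = m - log m - 1` of the Borel distribution with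
parameter `m`. -/
noncomputable def borelRate (m : ℝ) : ℝ :=
  m - Real.log m - 1

section Bounds

variable {m : ℝ} {l : ℕ}

lemma borelRate_nonneg (hm : 0 < m) : 0 ≤ borelRate m := by
  unfold borelRate
  linarith [Real.log_le_sub_one_of_pos hm]

lemma borelRate_pos (hm : 0 < m) (hm1 : m ≠ 1) : 0 < borelRate m := by
  unfold borelRate
  linarith [Real.log_lt_sub_one_of_pos hm hm1]

lemma continuousAt_borelRate (hm : m ≠ 0) : ContinuousAt borelRate m :=
  (continuousAt_id.sub (Real.continuousAt_log hm)).sub continuousAt_const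

lemma borelPMF_pos (hm : 0 < m) (hl : l ≠ 0) : 0 < borelPMF m l := by
  unfold borelPMF
  positivity

lemma log_borelPMF (hm : 0 < m) (hl : l ≠ 0) :
    Real.log (borelPMF m l) = -(borelRate m * l) - Real.log m - 3 / 2 * Real.log l
      - Real.log 2 / 2 - Real.log (Stirling.stirlingSeq l) := by
  have hl' : (l : ℝ) ≠ 0 := Nat.cast_ne_zero.2 hl
  have hpmf : Real.log (borelPMF m l) =
      -(m * l) + (l - 1) * (Real.log m + Real.log l) - Real.log l.factorial := by
    unfold borelPMF
    rw [Real.log_div (by positivity) (by positivity),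
      Real.log_mul (by positivity) (by positivity), Real.log_exp, Real.log_pow,
      Real.log_mul hm.ne' hl', Nat.cast_pred hl.bot_lt]
  have hstirling := Stirling.log_stirlingSeq_formula l
  rw [Real.log_mul two_ne_zero hl', Real.log_div hl' (Real.exp_ne_zero 1), Real.log_exp]
    at hstirling
  rw [hpmf, hstirling, borelRate]
  ring

lemma borelPMF_le (hm : 0 < m) (hl : l ≠ 0) :
    borelPMF m l ≤ Real.exp (-(borelRate m * l)) / m * (l : ℝ) ^ (-(3 / 2) : ℝ) := by
  have hl' : (0 : ℝ) < l := Nat.cast_pos.2 hl.bot_lt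
  have hstirling : 0 ≤ Real.log (Stirling.stirlingSeq l) :=
    Real.log_nonneg <| (Real.one_le_sqrt.2 (by linarith [Real.pi_gt_three])).trans
      (Stirling.sqrt_pi_le_stirlingSeq hl)
  rw [← Real.log_le_log_iff (borelPMF_pos hm hl) (by positivity), log_borelPMF hm hl,
    Real.log_mul (by positivity) (by positivity), Real.log_div (by positivity) hm.ne',
    Real.log_exp, Real.log_rpow hl']
  linarith [Real.log_nonneg one_le_two]

lemma borelPMF_add_le (hm : 0 < m) (hl : l ≠ 0) (k : ℕ) :
    borelPMF m (l + k) ≤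
      Real.exp (-(borelRate m * l)) / m * ((k + 1 : ℕ) : ℝ) ^ (-(3 / 2) : ℝ) := by
  have hrate := borelRate_nonneg hm
  refine (borelPMF_le hm (by lia)).trans ?_
  gcongr ?_ * ?_
  · gcongr
    lia
  · exact Real.rpow_le_rpow_of_nonpos (by positivity) (Nat.cast_le.2 (by lia)) (by norm_num)

lemma summable_succ_rpow_neg_three_halves :
    Summable fun k : ℕ => ((k + 1 : ℕ) : ℝ) ^ (-(3 / 2) : ℝ) :=
  (summable_nat_add_iff 1).2 (Real.summable_nat_rpow.2 (by norm_num))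

lemma summable_borelPMF_add (hm : 0 < m) (hl : l ≠ 0) : Summable fun k => borelPMF m (l + k) :=
  .of_nonneg_of_le (fun k => (borelPMF_pos hm (by lia)).le) (borelPMF_add_le hm hl)
    (summable_succ_rpow_neg_three_halves.mul_left _)

lemma borelPMF_le_borelTail (hm : 0 < m) (hl : l ≠ 0) : borelPMF m l ≤ borelTail m l :=
  (summable_borelPMF_add hm hl).le_tsum 0 fun k _ => (borelPMF_pos hm (by lia)).le

lemma log_borelPMF_le_log_borelTail (hm : 0 < m) (hl : l ≠ 0) :
    Real.log (borelPMF m l) ≤ Real.log (borelTail m l) :=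
  Real.log_le_log (borelPMF_pos hm hl) (borelPMF_le_borelTail hm hl)

lemma borelTail_le (hm : 0 < m) (hl : l ≠ 0) :
    borelTail m l ≤ Real.exp (-(borelRate m * l)) / m *
      ∑' k : ℕ, ((k + 1 : ℕ) : ℝ) ^ (-(3 / 2) : ℝ) :=
  hasSum_le (borelPMF_add_le hm hl) (summable_borelPMF_add hm hl).hasSum
    (summable_succ_rpow_neg_three_halves.hasSum.mul_left _)

lemma log_borelTail_le (hm : 0 < m) (hl : l ≠ 0) :
    Real.log (borelTail m l) ≤ -(borelRate m * l) - Real.log m +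
      Real.log (∑' k : ℕ, ((k + 1 : ℕ) : ℝ) ^ (-(3 / 2) : ℝ)) := by
  have htail : 0 < borelTail m l := (borelPMF_pos hm hl).trans_le (borelPMF_le_borelTail hm hl)
  have hsum : 0 < ∑' k : ℕ, ((k + 1 : ℕ) : ℝ) ^ (-(3 / 2) : ℝ) :=
    summable_succ_rpow_neg_three_halves.tsum_pos (fun k => by positivity) 0 (by positivity)
  refine (Real.log_le_log htail (borelTail_le hm hl)).trans_eq ?_
  rw [Real.log_mul (by positivity) hsum.ne', Real.log_div (by positivity) hm.ne', Real.log_exp]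

end Bounds

section Limits

variable {ι : Type*} {F : Filter ι} {m : ι → ℝ} {μ : ℝ} {l : ι → ℕ}

lemma log_borelPMF_add_borelRate_mul_isLittleO (hμ : 0 < μ) (hm : Tendsto m F (nhds μ))
    (hl : Tendsto l F atTop) :
    (fun i => Real.log (borelPMF (m i) (l i)) + borelRate μ * (l i : ℝ))
      =o[F] (fun i => (l i : ℝ)) := by
  have hcast : Tendsto (fun i => (l i : ℝ)) F atTop := tendsto_natCast_atTop_atTop.comp hl
  have hrate := sub_mul_isLittleO (k := fun i => (l i : ℝ))
    ((continuousAt_borelRate hμ.ne').tendsto.comp hm)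
  have hlog : (fun i => Real.log (l i)) =o[F] (fun i => (l i : ℝ)) :=
    Real.isLittleO_log_id_atTop.comp_tendsto hcast
  have hstirling : Tendsto (fun i => Real.log (Stirling.stirlingSeq (l i))) F
      (nhds (Real.log √Real.pi)) :=
    (Stirling.tendsto_stirlingSeq_sqrt_pi.comp hl).log (by positivity)
  have hbounded := isLittleO_of_tendsto_nhds_of_tendsto_norm
    (((hm.log hμ.ne').add_const (Real.log 2 / 2)).add hstirling)
    (tendsto_norm_atTop_atTop.comp hcast)
  refine ((hrate.sub (hlog.const_mul_left (3 / 2))).sub hbounded).congr' ?_ .rfl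
  filter_upwards [hm.eventually_const_lt hμ, hl.eventually_ne_atTop 0] with i hm hl
  rw [log_borelPMF hm hl, Function.comp_apply]
  ring

lemma log_borelTail_add_borelRate_mul_isLittleO (hμ : 0 < μ) (hm : Tendsto m F (nhds μ))
    (hl : Tendsto l F atTop) :
    (fun i => Real.log (borelTail (m i) (l i)) + borelRate μ * (l i : ℝ))
      =o[F] (fun i => (l i : ℝ)) := by
  have hcast : Tendsto (fun i => (l i : ℝ)) F atTop := tendsto_natCast_atTop_atTop.comp hl
  have hrate := sub_mul_isLittleO (k := fun i => (l i : ℝ))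
    ((continuousAt_borelRate hμ.ne').tendsto.comp hm)
  have hbounded := isLittleO_of_tendsto_nhds_of_tendsto_norm
    ((hm.log hμ.ne').sub_const (Real.log (∑' k : ℕ, ((k + 1 : ℕ) : ℝ) ^ (-(3 / 2) : ℝ))))
    (tendsto_norm_atTop_atTop.comp hcast)
  have hpos : ∀ᶠ i in F, 0 < m i := hm.eventually_const_lt hμ
  have hne : ∀ᶠ i in F, l i ≠ 0 := hl.eventually_ne_atTop 0
  refine isLittleO_of_le_of_le (log_borelPMF_add_borelRate_mul_isLittleO hμ hm hl)
    (hrate.sub hbounded) ?_ ?_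
  · filter_upwards [hpos, hne] with i hm hl
    exact add_le_add (log_borelPMF_le_log_borelTail hm hl) le_rfl
  · filter_upwards [hpos, hne] with i hm hl
    rw [Function.comp_apply]
    linarith [log_borelTail_le hm hl]

theorem borel_tail_asymptotics_general (hμ : 0 < μ) (hm : Tendsto m F (nhds μ))
    (hl : Tendsto l F atTop) :
    (fun i => Real.log (borelPMF (m i) (l i)) + (μ - Real.log μ - 1) * (l i : ℝ))
      =o[F] (fun i => (l i : ℝ)) ∧
    (fun i => Real.log (borelTail (m i) (l i)) + (μ - Real.log μ - 1) * (l i : ℝ))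
      =o[F] (fun i => (l i : ℝ)) :=
  ⟨log_borelPMF_add_borelRate_mul_isLittleO hμ hm hl,
    log_borelTail_add_borelRate_mul_isLittleO hμ hm hl⟩

end Limits

/-- **Tail asymptotics of the Borel distribution.**
If `μ n → μ ∈ (0,1)` and `l n → ∞`, then
`log P(X⁽ⁿ⁾ = l n) = -κ l n (1 + o(1))` and `log P(X⁽ⁿ⁾ ≥ l n) = -κ l n (1 + o(1))`,
where `κ = μ - log μ - 1 ∈ (0, ∞)`. -/
theorem borel_tail_asymptotics
    (μn : ℕ → ℝ) (hμn : ∀ n, μn n ∈ Set.Ioo (0 : ℝ) 1)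
    (μ : ℝ) (hμ : μ ∈ Set.Ioo (0 : ℝ) 1)
    (hconv : Tendsto μn atTop (nhds μ))
    (l : ℕ → ℕ) (hl : ∀ n, 0 < l n) (hltop : Tendsto l atTop atTop) :
    0 < μ - Real.log μ - 1 ∧
    (fun n => Real.log (borelPMF (μn n) (l n)) + (μ - Real.log μ - 1) * (l n : ℝ))
      =o[atTop] (fun n => (l n : ℝ)) ∧
    (fun n => Real.log (borelTail (μn n) (l n)) + (μ - Real.log μ - 1) * (l n : ℝ))
      =o[atTop] (fun n => (l n : ℝ)) :=
  ⟨borelRate_pos hμ.1 hμ.2.ne, borel_tail_asymptotics_general hμ.1 hconv hltop⟩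
end

section
/- Let n < m be positive integers and let h = (h_1,…,h_n) be any hash sequence of length m and size n. Then: (i) 0 ≤ d(h) ≤ n(n−1)/2; and (ii) for every permutation σ of {1,…,n}, the total displacement of the hash sequence (h_{σ(1)},…,h_{σ(n)}) equals the total displacement of (h_1,…,h_n). -/
open scoped Classical

/-- Displacement of a ball with hash address `a` when the set `occ` of urns is occupied:
the least `k` such that urn `a + k` (cyclically) is free. -/
noncomputable def hashStep (m : ℕ) (occ : Finset (ZMod m)) (a : ZMod m) : ℕ :=
  if hex : ∃ k : ℕ, a + (k : ZMod m) ∉ occ then Nat.find hex else 0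

/-- One insertion step: updates the occupied set and the accumulated total displacement. -/
noncomputable def hashFoldStep (m : ℕ) (p : Finset (ZMod m) × ℕ) (a : ZMod m) :
    Finset (ZMod m) × ℕ :=
  (insert (a + (hashStep m p.1 a : ZMod m)) p.1, p.2 + hashStep m p.1 a)

/-- Total displacement of a list of hash addresses (processed sequentially). -/
noncomputable def totalDispList (m : ℕ) (l : List (ZMod m)) : ℕ :=
  (l.foldl (hashFoldStep m) (∅, 0)).2

/-- Total displacement `d(h)` of a hash sequence `h` of length `m` and size `n`. -/
noncomputable def totalDisp (m n : ℕ) (h : Fin n → Fin m) : ℕ :=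
  totalDispList m ((List.ofFn h).map (fun x => ((x : ℕ) : ZMod m)))

/-- `P(d_{m,n} ≥ a)` where the hash sequence is uniform on `{1,…,m}^n`. -/
noncomputable def dProbGe (m n : ℕ) (a : ℝ) : ℝ :=
  ((Finset.univ.filter (fun h : Fin n → Fin m => a ≤ (totalDisp m n h : ℝ))).card : ℝ)
    / (m : ℝ) ^ n

/-!
When two consecutive balls head for the same free urn `u`, the first takes it and the second
travels on from `u` to the next free urn. The further distance depends only on `u`, so the two
orders of insertion occupy the same urns at the same total cost; as adjacent transpositions
generate all permutations, the total displacement is invariant. The bound holds because the urns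
a ball passes over are distinct and occupied, so the `i`-th ball moves at most `i - 1` steps.
-/

section Displacement

variable {m : ℕ} {occ : Finset (ZMod m)} {a x : ZMod m}

theorem exists_add_natCast_notMem (hocc : occ.card < m) (a : ZMod m) :
    ∃ k : ℕ, a + (k : ZMod m) ∉ occ := by
  have : NeZero m := ⟨Nat.ne_zero_of_lt hocc⟩
  obtain ⟨c, -, hc⟩ : ∃ c ∈ Finset.univ, c ∉ occ :=
    Finset.exists_mem_notMem_of_card_lt_card (by rwa [Finset.card_univ, ZMod.card])
  exact ⟨(c - a).val, by rwa [ZMod.natCast_zmod_val, add_sub_cancel]⟩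

theorem hashStep_eq_of_forall_lt_mem {k : ℕ} (hk : a + (k : ZMod m) ∉ occ)
    (hlt : ∀ i < k, a + (i : ZMod m) ∈ occ) : hashStep m occ a = k := by
  rw [hashStep, dif_pos ⟨k, hk⟩, Nat.find_eq_iff]
  exact ⟨hk, fun i hi => not_not.2 (hlt i hi)⟩

theorem add_natCast_mem_of_lt_hashStep {i : ℕ} (hi : i < hashStep m occ a) :
    a + (i : ZMod m) ∈ occ := by
  unfold hashStep at hi
  split_ifs at hi with hex
  · exact not_not.1 (Nat.find_min hex hi)
  · exact absurd hi i.not_lt_zero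

/-- The urn that receives a ball with hash address `a` when the urns in `occ` are occupied; it is
free as soon as some urn is, and equals `a` when there is none. -/
noncomputable def landingUrn (m : ℕ) (occ : Finset (ZMod m)) (a : ZMod m) : ZMod m :=
  a + (hashStep m occ a : ZMod m)

theorem landingUrn_notMem_of_exists (hex : ∃ k : ℕ, a + (k : ZMod m) ∉ occ) :
    landingUrn m occ a ∉ occ := by
  rw [landingUrn, hashStep, dif_pos hex]
  exact Nat.find_spec hex

theorem landingUrn_notMem (hocc : occ.card < m) (a : ZMod m) : landingUrn m occ a ∉ occ :=
  landingUrn_notMem_of_exists (exists_add_natCast_notMem hocc a)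

theorem add_natCast_ne_of_lt_of_lt_hashStep {i j : ℕ} (hij : i < j) (hj : j < hashStep m occ a) :
    a + (i : ZMod m) ≠ a + (j : ZMod m) := by
  intro heq
  have hland : landingUrn m occ a ∉ occ := by
    refine landingUrn_notMem_of_exists (not_not.1 fun hex => ?_)
    simp only [hashStep, dif_neg hex, not_lt_zero] at hj
  -- The ball would already have met its landing urn `j - i` steps earlier.
  have hearly : a + ((hashStep m occ a - j + i : ℕ) : ZMod m) = landingUrn m occ a := by
    rw [landingUrn, Nat.cast_add, Nat.cast_sub hj.le, add_left_cancel heq, sub_add_cancel]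
  exact hland (hearly ▸ add_natCast_mem_of_lt_hashStep (by omega))

theorem injOn_add_natCast_range_hashStep (occ : Finset (ZMod m)) (a : ZMod m) :
    Set.InjOn (fun i : ℕ => a + (i : ZMod m)) (Finset.range (hashStep m occ a)) := by
  intro i hi j hj heq
  by_contra hne
  rcases lt_or_gt_of_ne hne with hij | hji
  · exact add_natCast_ne_of_lt_of_lt_hashStep hij (Finset.mem_range.1 hj) heq
  · exact add_natCast_ne_of_lt_of_lt_hashStep hji (Finset.mem_range.1 hi) heq.symm

theorem hashStep_le_card (occ : Finset (ZMod m)) (a : ZMod m) : hashStep m occ a ≤ occ.card := by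
  simpa only [Finset.card_range] using Finset.card_le_card_of_injOn
    (fun i : ℕ => a + (i : ZMod m))
    (fun i hi => add_natCast_mem_of_lt_hashStep (Finset.mem_range.1 hi))
    (injOn_add_natCast_range_hashStep occ a)

theorem hashStep_insert_of_landingUrn_ne (hocc : occ.card < m) (hx : landingUrn m occ a ≠ x) :
    hashStep m (insert x occ) a = hashStep m occ a :=
  hashStep_eq_of_forall_lt_mem
    (Finset.mem_insert.not.2 (not_or.2 ⟨hx, landingUrn_notMem hocc a⟩))
    fun _ hi => Finset.mem_insert_of_mem (add_natCast_mem_of_lt_hashStep hi)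

theorem landingUrn_insert_of_landingUrn_ne (hocc : occ.card < m) (hx : landingUrn m occ a ≠ x) :
    landingUrn m (insert x occ) a = landingUrn m occ a := by
  rw [landingUrn, hashStep_insert_of_landingUrn_ne hocc hx, landingUrn]

theorem hashStep_insert_of_landingUrn_eq (hocc : (insert x occ).card < m)
    (hx : landingUrn m occ a = x) :
    hashStep m (insert x occ) a = hashStep m occ a + hashStep m (insert x occ) x := by
  have hshift (j : ℕ) : a + ((hashStep m occ a + j : ℕ) : ZMod m) = x + (j : ZMod m) := by
    rw [Nat.cast_add, ← add_assoc, ← hx, landingUrn]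
  refine hashStep_eq_of_forall_lt_mem ?_ fun i hi => ?_
  · rw [hshift]
    exact landingUrn_notMem hocc x
  · rcases lt_or_ge i (hashStep m occ a) with hlt | hge
    · exact Finset.mem_insert_of_mem (add_natCast_mem_of_lt_hashStep hlt)
    · obtain ⟨j, rfl⟩ := Nat.exists_eq_add_of_le hge
      rw [hshift]
      exact add_natCast_mem_of_lt_hashStep (Nat.lt_of_add_lt_add_left hi)

theorem landingUrn_insert_of_landingUrn_eq (hocc : (insert x occ).card < m)
    (hx : landingUrn m occ a = x) :
    landingUrn m (insert x occ) a = landingUrn m (insert x occ) x := by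
  rw [landingUrn, hashStep_insert_of_landingUrn_eq hocc hx, Nat.cast_add, ← add_assoc,
    ← landingUrn, hx, ← landingUrn]

theorem insert_landingUrn_comm (hocc : occ.card + 2 ≤ m) (a b : ZMod m) :
    insert (landingUrn m (insert (landingUrn m occ a) occ) b) (insert (landingUrn m occ a) occ) =
      insert (landingUrn m (insert (landingUrn m occ b) occ) a)
        (insert (landingUrn m occ b) occ) := by
  by_cases hab : landingUrn m occ a = landingUrn m occ b
  · have hins := (Finset.card_insert_le (landingUrn m occ b) occ).trans_lt hocc
    rw [hab, landingUrn_insert_of_landingUrn_eq hins rfl,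
      landingUrn_insert_of_landingUrn_eq hins hab]
  · have hlt : occ.card < m := by omega
    rw [landingUrn_insert_of_landingUrn_ne hlt (Ne.symm hab),
      landingUrn_insert_of_landingUrn_ne hlt hab, Finset.insert_comm]

theorem hashStep_add_hashStep_insert_comm (hocc : occ.card + 2 ≤ m) (a b : ZMod m) :
    hashStep m occ a + hashStep m (insert (landingUrn m occ a) occ) b =
      hashStep m occ b + hashStep m (insert (landingUrn m occ b) occ) a := by
  by_cases hab : landingUrn m occ a = landingUrn m occ b
  · have hins := (Finset.card_insert_le (landingUrn m occ b) occ).trans_lt hocc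
    rw [hab, hashStep_insert_of_landingUrn_eq hins rfl,
      hashStep_insert_of_landingUrn_eq hins hab, add_left_comm]
  · have hlt : occ.card < m := by omega
    rw [hashStep_insert_of_landingUrn_ne hlt (Ne.symm hab),
      hashStep_insert_of_landingUrn_ne hlt hab, add_comm]

end Displacement

section Fold

variable {m : ℕ} {p : Finset (ZMod m) × ℕ} {l₁ l₂ : List (ZMod m)}

theorem card_hashFoldStep_le (p : Finset (ZMod m) × ℕ) (a : ZMod m) :
    (hashFoldStep m p a).1.card ≤ p.1.card + 1 :=
  Finset.card_insert_le _ _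

theorem hashFoldStep_comm (hp : p.1.card + 2 ≤ m) (a b : ZMod m) :
    hashFoldStep m (hashFoldStep m p a) b = hashFoldStep m (hashFoldStep m p b) a := by
  refine Prod.ext (insert_landingUrn_comm hp a b) ?_
  simp only [hashFoldStep, add_assoc]
  exact congrArg (p.2 + ·) (hashStep_add_hashStep_insert_comm hp a b)

theorem foldl_hashFoldStep_perm (hl : l₁.Perm l₂) (hp : p.1.card + l₁.length ≤ m) :
    l₁.foldl (hashFoldStep m) p = l₂.foldl (hashFoldStep m) p := by
  induction hl generalizing p with
  | nil => rfl
  | cons a _ ih =>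
    have hcard := card_hashFoldStep_le p a
    rw [List.length_cons] at hp
    exact ih (by omega)
  | swap a b l =>
    simp only [List.length_cons] at hp
    simp only [List.foldl_cons]
    rw [hashFoldStep_comm (by omega)]
  | trans h₁ _ ih₁ ih₂ => exact (ih₁ hp).trans (ih₂ (h₁.length_eq ▸ hp))

theorem foldl_hashFoldStep_snd_le (l : List (ZMod m)) (p : Finset (ZMod m) × ℕ) :
    (l.foldl (hashFoldStep m) p).2 ≤ p.2 + l.length * p.1.card + l.length.choose 2 := by
  induction l generalizing p with
  | nil => simp only [List.foldl_nil, List.length_nil, zero_mul, add_zero, Nat.le_add_right]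
  | cons a l ih =>
    have hchoose : (l.length + 1).choose 2 = l.length + l.length.choose 2 := by
      rw [Nat.choose_succ_succ', Nat.choose_one_right]
    calc (l.foldl (hashFoldStep m) (hashFoldStep m p a)).2
        ≤ (p.2 + hashStep m p.1 a) + l.length * (hashFoldStep m p a).1.card
            + l.length.choose 2 := ih _
      _ ≤ (p.2 + p.1.card) + l.length * (p.1.card + 1) + l.length.choose 2 := by
          gcongr
          · exact hashStep_le_card p.1 a
          · exact card_hashFoldStep_le p a
      _ = p.2 + (l.length + 1) * p.1.card + (l.length + 1).choose 2 := by
          rw [hchoose]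
          ring

theorem totalDispList_perm (hl : l₁.Perm l₂) (hlen : l₁.length ≤ m) :
    totalDispList m l₁ = totalDispList m l₂ :=
  congrArg Prod.snd (foldl_hashFoldStep_perm hl (by rwa [Finset.card_empty, zero_add]))

theorem totalDispList_le_choose_two (l : List (ZMod m)) :
    totalDispList m l ≤ l.length.choose 2 := by
  simpa only [totalDispList, Finset.card_empty, mul_zero, zero_add] using
    foldl_hashFoldStep_snd_le l (∅, 0)

end Fold

-- In `totalDisp` the list `List.ofFn h` is first coerced to `List ℕ` through the list monad.
theorem totalDisp_eq_totalDispList_ofFn {m n : ℕ} (h : Fin n → Fin m) :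
    totalDisp m n h = totalDispList m (List.ofFn fun i => ((h i : ℕ) : ZMod m)) := by
  simp [totalDisp, ← List.map_eq_flatMap, Function.comp_def]

theorem totalDisp_le_choose_two {m n : ℕ} (h : Fin n → Fin m) : totalDisp m n h ≤ n.choose 2 := by
  rw [totalDisp_eq_totalDispList_ofFn]
  exact (totalDispList_le_choose_two _).trans_eq (by rw [List.length_ofFn])

theorem totalDisp_comp_perm {m n : ℕ} (hle : n ≤ m) (h : Fin n → Fin m)
    (σ : Equiv.Perm (Fin n)) : totalDisp m n (h ∘ σ) = totalDisp m n h := by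
  simp only [totalDisp_eq_totalDispList_ofFn]
  exact totalDispList_perm (Equiv.Perm.ofFn_comp_perm σ fun i => ((h i : ℕ) : ZMod m))
    (by rwa [List.length_ofFn])

theorem totalDisp_le_and_perm_invariant_general (m n : ℕ) (hle : n ≤ m) (h : Fin n → Fin m) :
    ((0 : ℝ) ≤ (totalDisp m n h : ℝ) ∧
      (totalDisp m n h : ℝ) ≤ (n : ℝ) * ((n : ℝ) - 1) / 2) ∧
    ∀ σ : Equiv.Perm (Fin n), totalDisp m n (h ∘ σ) = totalDisp m n h := by
  refine ⟨⟨Nat.cast_nonneg _, ?_⟩, totalDisp_comp_perm hle h⟩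
  rw [← Nat.cast_choose_two]
  exact_mod_cast totalDisp_le_choose_two h

/-- **Basic properties of the total displacement** (Lemma on hashing):
for `n < m` and any hash sequence `h` of length `m` and size `n`,
(i) `0 ≤ d(h) ≤ n(n-1)/2`, and (ii) `d` is invariant under permutations of the sequence. -/
theorem totalDisp_le_and_perm_invariant (m n : ℕ) (hn : 0 < n) (hlt : n < m)
    (h : Fin n → Fin m) :
    ((0 : ℝ) ≤ (totalDisp m n h : ℝ) ∧
      (totalDisp m n h : ℝ) ≤ (n : ℝ) * ((n : ℝ) - 1) / 2) ∧
    ∀ σ : Equiv.Perm (Fin n), totalDisp m n (h ∘ σ) = totalDisp m n h :=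
  totalDisp_le_and_perm_invariant_general m n hlt.le h
end
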